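/- Let a = 2/√3 and for b > 0 define L(b) = ∫₀^{a/b} √((1 − (1/4)·(a − 2bu)²)/(a·u − b·u²)) du. Then the function b ↦ L(b) is strictly decreasing on (0, ∞), tends to +∞ as b → 0⁺, and tends to 0 as b → ∞. -/

import Mathlib

open intervalIntegral Filter

/-- The length of the generating curve of the momentum profile `φ u = a·u - b·u²`
with `a = 2/√3`. -/
noncomputable def genLength (b : ℝ) : ℝ :=
  ∫ u in (0 : ℝ)..(2 / Real.sqrt 3) / b,
    Real.sqrt ((1 - (1 / 4) * (2 / Real.sqrt 3 - 2 * b * u) ^ 2) /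
      ((2 / Real.sqrt 3) * u - b * u ^ 2))

/-!
The substitution `v = b·u` gives the scaling law `L(b) = L(1)/√b` (`genLength_scaling`), so
everything reduces to `0 < L(1)` (`genLength_one_pos`). On `(0, a)` the integrand of `L(1)` is positive,
so the point is its integrability, as the integral of a non-integrable function would be `0`.
Since `a² = 4/3`, the numerator lies in `[2/3, 1]`, and the partial fraction
`1/(v(a - v)) = (1/v + 1/(a - v))/a` with `a ≥ 1` bounds the integrand by
`v^(-1/2) + (a - v)^(-1/2)`.
-/

theorem genLength_scaling {b : ℝ} (hb : 0 < b) :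
    genLength b = genLength 1 / Real.sqrt b := by
  unfold genLength
  generalize 2 / Real.sqrt 3 = a
  have h1 : ∀ u : ℝ, Real.sqrt ((1 - (1 / 4) * (a - 2 * b * u) ^ 2) / (a * u - b * u ^ 2))
      = Real.sqrt b * (fun v : ℝ => Real.sqrt ((1 - (1 / 4) * (a - 2 * 1 * v) ^ 2) /
        (a * v - 1 * v ^ 2))) (b * u) := by
    intro u
    simp only
    rw [← Real.sqrt_mul hb.le]
    congr 1
    have e : a * (b * u) - 1 * (b * u) ^ 2 = b * (a * u - b * u ^ 2) := by ring
    rw [e, ← mul_div_assoc, mul_div_mul_left _ _ hb.ne']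
    ring
  simp_rw [h1]
  rw [intervalIntegral.integral_const_mul,
    intervalIntegral.integral_comp_mul_left (fun v : ℝ => Real.sqrt
      ((1 - (1 / 4) * (a - 2 * 1 * v) ^ 2) / (a * v - 1 * v ^ 2))) hb.ne']
  have e2 : b * (a / b) = a / 1 := by field_simp
  rw [e2, mul_zero, smul_eq_mul, ← mul_assoc, div_eq_mul_inv _ (Real.sqrt b),
    mul_comm _ (Real.sqrt b)⁻¹]
  congr 1
  have hs := Real.sqrt_pos.2 hb
  field_simp
  exact Real.sq_sqrt hb.le

theorem integrand_le {a v : ℝ} (ha : 1 ≤ a) (hv : 0 < v) (hva : v < a) :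
    Real.sqrt ((1 - (1 / 4) * (a - 2 * 1 * v) ^ 2) / (a * v - 1 * v ^ 2))
      ≤ v ^ (-(1 / 2) : ℝ) + (a - v) ^ (-(1 / 2) : ℝ) := by
  have hw : 0 < a - v := sub_pos.2 hva
  rw [Real.rpow_neg hv.le, Real.rpow_neg hw.le, ← Real.sqrt_eq_rpow, ← Real.sqrt_eq_rpow,
    ← Real.sqrt_inv, ← Real.sqrt_inv]
  have hsub : Real.sqrt (v⁻¹ + (a - v)⁻¹) ≤ Real.sqrt v⁻¹ + Real.sqrt (a - v)⁻¹ := by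
    refine Real.sqrt_le_iff.2 ⟨by positivity, ?_⟩
    rw [add_sq, Real.sq_sqrt (inv_nonneg.2 hv.le), Real.sq_sqrt (inv_nonneg.2 hw.le)]
    have : 0 ≤ 2 * Real.sqrt v⁻¹ * Real.sqrt (a - v)⁻¹ := by positivity
    linarith
  refine le_trans (Real.sqrt_le_sqrt ?_) hsub
  have hD : 0 < a * v - 1 * v ^ 2 := by nlinarith [mul_pos hv hw]
  have e : v⁻¹ + (a - v)⁻¹ = a / (a * v - 1 * v ^ 2) := by
    have : a * v - 1 * v ^ 2 = v * (a - v) := by ring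
    rw [this]
    field_simp
    ring
  rw [e]
  gcongr
  nlinarith [sq_nonneg (a - 2 * 1 * v)]

theorem genLength_one_pos : 0 < genLength 1 := by
  unfold genLength
  have ha0 : 0 < 2 / Real.sqrt 3 := by positivity
  have ha2 : (2 / Real.sqrt 3) ^ 2 = 4 / 3 := by
    rw [div_pow, Real.sq_sqrt (by norm_num)]
    norm_num
  generalize 2 / Real.sqrt 3 = a at *
  have ha1 : 1 ≤ a := by nlinarith
  rw [div_one]
  apply intervalIntegral.intervalIntegral_pos_of_pos_on _ _ ha0
  · have i1 : IntervalIntegrable (fun v : ℝ => v ^ (-(1 / 2) : ℝ)) MeasureTheory.volume 0 a :=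
      intervalIntegral.intervalIntegrable_rpow' (by norm_num)
    have i2 : IntervalIntegrable (fun v : ℝ => (a - v) ^ (-(1 / 2) : ℝ))
        MeasureTheory.volume 0 a := by
      have := (i1.comp_sub_left a).symm
      simpa using this
    -- The bound is needed only almost everywhere, which discards the endpoint `v = a`.
    refine (i1.add i2).mono_fun (Measurable.aestronglyMeasurable (by fun_prop)) ?_
    rw [Set.uIoc_of_le ha0.le, ← MeasureTheory.restrict_Ioo_eq_restrict_Ioc]
    refine (MeasureTheory.ae_restrict_iff' measurableSet_Ioo).2 (Eventually.of_forall ?_)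
    intro v hv
    beta_reduce
    rw [Real.norm_of_nonneg (Real.sqrt_nonneg _)]
    exact (integrand_le ha1 hv.1 hv.2).trans (le_abs_self _)
  · intro v hv
    have hv' := mul_pos hv.1 (sub_pos.2 hv.2)
    apply Real.sqrt_pos.2
    apply div_pos <;> nlinarith

/-- `b ↦ L(b)` is strictly decreasing on `(0, ∞)`, tends to `+∞` as `b → 0⁺`,
and tends to `0` as `b → ∞`. -/
theorem stmt_8 :
    StrictAntiOn genLength (Set.Ioi (0 : ℝ)) ∧
      Tendsto genLength (nhdsWithin 0 (Set.Ioi (0 : ℝ))) atTop ∧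
      Tendsto genLength atTop (nhds 0) := by
  have hL := genLength_one_pos
  refine ⟨?_, ?_, ?_⟩
  · intro x hx y hy hxy
    rw [genLength_scaling hx, genLength_scaling hy]
    exact div_lt_div_of_pos_left hL (Real.sqrt_pos.2 hx) (Real.sqrt_lt_sqrt (le_of_lt hx) hxy)
  · have h0 : Tendsto Real.sqrt (nhdsWithin 0 (Set.Ioi 0)) (nhdsWithin 0 (Set.Ioi 0)) := by
      refine tendsto_nhdsWithin_iff.2 ⟨?_, ?_⟩
      · simpa using (Real.continuous_sqrt.tendsto 0).mono_left nhdsWithin_le_nhds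
      · filter_upwards [self_mem_nhdsWithin] with x hx using Real.sqrt_pos.2 hx
    refine ((tendsto_inv_nhdsGT_zero.comp h0).const_mul_atTop hL).congr' ?_
    filter_upwards [self_mem_nhdsWithin] with x hx
    rw [genLength_scaling hx, div_eq_mul_inv, Function.comp]
  · refine (Real.tendsto_sqrt_atTop.const_div_atTop (genLength 1)).congr' ?_
    filter_upwards [eventually_gt_atTop 0] with x hx
    rw [genLength_scaling hx]
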